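/- arXiv:2508.07675 — 5 statements merged into one kernel-verified Lean document; each statement's English description precedes it below -/
import Mathlib

section
/- Let Q be a finite set of m queries, p : Q → [0,1], c : Q → [0,1], and d : Q × Q → [0,∞). The semantic-cache loss ℓ(M; p, c, d) = Σ_{q ∈ Q} p(q)·min{c(q), min_{u ∈ M} d(q,u)} is supermodular in M: for any A ⊆ B ⊆ Q and any q ∈ Q \ B, ℓ(A ∪ {q}; p, c, d) − ℓ(A; p, c, d) ≤ ℓ(B ∪ {q}; p, c, d) − ℓ(B; p, c, d). -/
/-- The semantic-cache loss: `ℓ(M; p, c, d) = Σ_{q ∈ Q} p(q) · min{c(q), min_{u ∈ M} d(q,u)}`,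
with the convention that the inner minimum over an empty cache `M` is `+∞`, so the
summand degenerates to `p(q) · c(q)`. -/
noncomputable def cacheLoss {Q : Type*} [Fintype Q] (p c : Q → ℝ) (d : Q → Q → ℝ)
    (M : Finset Q) : ℝ :=
  ∑ q : Q, p q * (if h : M.Nonempty then min (c q) (M.inf' h (fun u => d q u)) else c q)

/-!
Each summand of the loss is, up to the weight `p q`, a minimum `x = min {c q, d q u : u ∈ M}`, which
decreases as `M` grows. Adding a point at distance `z` changes it by `min z x - x = min (z - x) 0`,
a decrease that can only shrink in size as `x` gets smaller, that is, as `M` grows.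
-/

section FoldMin

variable {ι α : Type*} [LinearOrder α]

theorem min_inf'_eq_fold_min (b : α) (f : ι → α) {s : Finset ι} (hs : s.Nonempty) :
    min b (s.inf' hs f) = s.fold min b f :=
  eq_of_forall_le_iff fun a => by
    rw [le_min_iff, Finset.le_inf'_iff, Finset.le_fold_min]

theorem fold_min_antitone (b : α) (f : ι → α) :
    Antitone fun s : Finset ι => s.fold min b f := by
  intro s t hst
  obtain ⟨hb, hf⟩ := (Finset.le_fold_min _).1 (le_refl (t.fold min b f))
  exact (Finset.le_fold_min _).2 ⟨hb, fun i hi => hf i (hst hi)⟩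

variable [AddCommGroup α] [IsOrderedAddMonoid α]

theorem min_sub_self_antitone (z : α) : Antitone fun x => min z x - x := by
  intro x y hxy
  calc min z y - y = min (z - y) 0 := by rw [← min_sub_sub_right, sub_self]
    _ ≤ min (z - x) 0 := min_le_min_right 0 (sub_le_sub_left hxy z)
    _ = min z x - x := by rw [← min_sub_sub_right, sub_self]

theorem fold_min_insert_sub_fold_min_mono [DecidableEq ι] (b : α) (f : ι → α) (i : ι) :
    Monotone fun s : Finset ι => (insert i s).fold min b f - s.fold min b f := by
  simp only [Finset.fold_insert_idem]
  exact (min_sub_self_antitone (f i)).comp (fold_min_antitone b f)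

end FoldMin

section CacheLoss

variable {Q : Type*} [Fintype Q]

theorem cacheLoss_eq_sum_fold_min (p c : Q → ℝ) (d : Q → Q → ℝ) (M : Finset Q) :
    cacheLoss p c d M = ∑ x, p x * M.fold min (c x) (d x) := by
  unfold cacheLoss
  refine Finset.sum_congr rfl fun x _ => congrArg (p x * ·) ?_
  split_ifs with hM
  · exact min_inf'_eq_fold_min (c x) (d x) hM
  · rw [Finset.not_nonempty_iff_eq_empty.1 hM, Finset.fold_empty]

theorem cacheLoss_insert_sub_cacheLoss [DecidableEq Q] (p c : Q → ℝ) (d : Q → Q → ℝ)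
    (q : Q) (M : Finset Q) :
    cacheLoss p c d (insert q M) - cacheLoss p c d M =
      ∑ x, p x * ((insert q M).fold min (c x) (d x) - M.fold min (c x) (d x)) := by
  simp only [cacheLoss_eq_sum_fold_min, mul_sub, Finset.sum_sub_distrib]

theorem cacheLoss_supermodular_general [DecidableEq Q] {p : Q → ℝ} (hp : ∀ x, 0 ≤ p x)
    (c : Q → ℝ) (d : Q → Q → ℝ) {A B : Finset Q} (hAB : A ⊆ B) (q : Q) :
    cacheLoss p c d (insert q A) - cacheLoss p c d A ≤
      cacheLoss p c d (insert q B) - cacheLoss p c d B := by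
  rw [cacheLoss_insert_sub_cacheLoss, cacheLoss_insert_sub_cacheLoss]
  exact Finset.sum_le_sum fun x _ =>
    mul_le_mul_of_nonneg_left (fold_min_insert_sub_fold_min_mono (c x) (d x) q hAB) (hp x)

end CacheLoss

/-- the semantic-cache loss is supermodular in the cache `M`:
for `A ⊆ B ⊆ Q` and `q ∉ B`,
`ℓ(A ∪ {q}) − ℓ(A) ≤ ℓ(B ∪ {q}) − ℓ(B)`. -/
theorem cacheLoss_supermodular {Q : Type*} [Fintype Q] [DecidableEq Q]
    (m : ℕ) (hm : Fintype.card Q = m)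
    (p c : Q → ℝ) (d : Q → Q → ℝ)
    (hp : ∀ q, 0 ≤ p q ∧ p q ≤ 1) (hc : ∀ q, 0 ≤ c q ∧ c q ≤ 1)
    (hd : ∀ q u, 0 ≤ d q u)
    (A B : Finset Q) (hAB : A ⊆ B) (q : Q) (hq : q ∉ B) :
    cacheLoss p c d (insert q A) - cacheLoss p c d A ≤
      cacheLoss p c d (insert q B) - cacheLoss p c d B :=
  cacheLoss_supermodular_general (fun x => (hp x).1) c d hAB q
end

section
/- Let Q be a finite set of m queries, p : Q → [0,1], c : Q → [0,1], d : Q × Q → [0,∞), and 1 ≤ k ≤ m. Write ℓ(M) = ℓ(M; p, c, d). Assume ℓ(∅) > ℓ({q}) for all q ∈ Q, and define the curvature κ = 1 − min_{q ∈ Q} (ℓ(Q \ {q}) − ℓ(Q)) / (ℓ(∅) − ℓ({q})); assume κ < 1 and set β = κ/(1−κ). Let M₀ = Q and, for i = 1,…,m−k, let M_i = M_{i−1} \ {q_i} where q_i ∈ argmin_{q ∈ M_{i−1}} ℓ(M_{i−1} \ {q}) (reverse greedy). Let M* be a minimizer of ℓ over subsets of Q of size at most k. Then the reverse-greedy output M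 = M_{m−k} satisfies ℓ(M) ≤ ((e^β − 1)/β) · ℓ(M*), with the convention (e^0−1)/0 = 1 when β = 0. -/
/-!
Fix a cache `S` of size at most `k`. Each step of reverse greedy removes some `x` from the current
set `A`, leaving `t` removals to go. Write `r = |A \ S| ≥ t + 1` and `H = ℓ(A ∩ S) - ℓ(A)`. By
supermodularity the removals of the elements of `A \ S` together cost at most `H`, so the cheapest
removal costs `δ ≤ H / r`. If `x ∉ S`, then `H` drops by `δ` and `r` by one; if `x ∈ S`, then the
curvature bound lets `H` grow by at most `β δ`. In either case the potential
`ℓ(A) + ψ(t / r) H` with `ψ(s) = ∫₀ˢ exp (β x) dx` does not increase, by the tangent line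
inequality for the convex function `ψ`. It equals `ℓ(A)` when no removal is left, and at the start
it is at most `ℓ(Q) + ψ(1) (ℓ(S) - ℓ(Q)) ≤ ψ(1) ℓ(S)`.
-/

/-- Supermodularity of a function on a lattice, in particular of a set function. -/
def Supermodular {L R : Type*} [Lattice L] [Add R] [LE R] (f : L → R) : Prop :=
  ∀ a b, f a + f b ≤ f (a ⊔ b) + f (a ⊓ b)

/-- The set `B` arises from `A` by removing an element whose removal gives the smallest value
of `f`: one step of the reverse greedy algorithm. -/
def IsReverseGreedyStep {α R : Type*} [DecidableEq α] [LE R] (f : Finset α → R)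
    (A B : Finset α) : Prop :=
  ∃ x ∈ A, (∀ y ∈ A, f (A \ {x}) ≤ f (A \ {y})) ∧ B = A \ {x}

/-- The minimum of `a` and of the values of `f` on `S`: the cost of a single query with fallback
cost `a` and distances `f` to the cached elements. -/
def cappedMin {ι R : Type*} [LinearOrder R] (a : R) (f : ι → R) (S : Finset ι) : R :=
  if h : S.Nonempty then min a (S.inf' h f) else a

/-- The integral `∫₀ˢ exp (β x) dx`, which is the weight of the greedy potential. -/
noncomputable def expGrowth (β s : ℝ) : ℝ :=
  if β = 0 then s else (Real.exp (β * s) - 1) / β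

section CappedMin

variable {ι R : Type*} [LinearOrder R] {a : R} {f : ι → R}

theorem le_cappedMin_iff {S : Finset ι} {b : R} :
    b ≤ cappedMin a f S ↔ b ≤ a ∧ ∀ u ∈ S, b ≤ f u := by
  unfold cappedMin
  split_ifs with h
  · rw [le_min_iff, Finset.le_inf'_iff]
  · simp [Finset.not_nonempty_iff_eq_empty.mp h]

theorem antitone_cappedMin : Antitone (cappedMin a f) := fun _ _ hST =>
  have ⟨ha, hf⟩ := le_cappedMin_iff.mp le_rfl
  le_cappedMin_iff.mpr ⟨ha, fun u hu => hf u (hST hu)⟩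

theorem cappedMin_union [DecidableEq ι] (S T : Finset ι) :
    cappedMin a f (S ∪ T) = min (cappedMin a f S) (cappedMin a f T) :=
  eq_of_forall_le_iff fun b => by
    simp only [le_min_iff, le_cappedMin_iff, Finset.mem_union]
    grind

theorem supermodular_cappedMin [AddCommMonoid R] [IsOrderedAddMonoid R] [DecidableEq ι] :
    Supermodular (cappedMin a f) := fun S T => by
  rw [Finset.sup_eq_union, cappedMin_union, ← min_add_max (cappedMin a f S)]
  gcongr
  exact max_le (antitone_cappedMin Finset.inter_subset_left)
    (antitone_cappedMin Finset.inter_subset_right)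

end CappedMin

section CacheLoss

variable {Q : Type*} [Fintype Q] {p c : Q → ℝ} {d : Q → Q → ℝ}

theorem cacheLoss_eq_sum_cappedMin (M : Finset Q) :
    cacheLoss p c d M = ∑ q, p q * cappedMin (c q) (d q) M :=
  rfl

theorem antitone_cacheLoss (hp : ∀ q, 0 ≤ p q) : Antitone (cacheLoss p c d) := fun _ _ hST =>
  Finset.sum_le_sum fun q _ => mul_le_mul_of_nonneg_left (antitone_cappedMin hST) (hp q)

theorem supermodular_cacheLoss [DecidableEq Q] (hp : ∀ q, 0 ≤ p q) :
    Supermodular (cacheLoss p c d) := fun S T => by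
  simp only [cacheLoss_eq_sum_cappedMin, ← Finset.sum_add_distrib, ← mul_add]
  exact Finset.sum_le_sum fun q _ => mul_le_mul_of_nonneg_left (supermodular_cappedMin S T) (hp q)

theorem cacheLoss_nonneg (hp : ∀ q, 0 ≤ p q) (hc : ∀ q, 0 ≤ c q) (hd : ∀ q u, 0 ≤ d q u)
    (M : Finset Q) : 0 ≤ cacheLoss p c d M :=
  Finset.sum_nonneg fun q _ =>
    mul_nonneg (hp q) (le_cappedMin_iff.mpr ⟨hc q, fun u _ => hd q u⟩)

end CacheLoss

section ExpGrowth

variable {β s h H δ : ℝ}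

theorem expGrowth_zero_right (β : ℝ) : expGrowth β 0 = 0 := by
  simp [expGrowth]

theorem mul_expGrowth (β s : ℝ) : β * expGrowth β s = Real.exp (β * s) - 1 := by
  unfold expGrowth
  split_ifs with hβ
  · simp [hβ]
  · exact mul_div_cancel₀ _ hβ

theorem add_exp_mul_sub_le_expGrowth (hβ : 0 ≤ β) (s t : ℝ) :
    expGrowth β s + Real.exp (β * s) * (t - s) ≤ expGrowth β t := by
  rcases hβ.eq_or_lt with rfl | hβ
  · simp [expGrowth]
  refine le_of_mul_le_mul_left ?_ hβ
  calc β * (expGrowth β s + Real.exp (β * s) * (t - s))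
      = Real.exp (β * s) * (β * (t - s) + 1) - 1 := by
        rw [mul_add, mul_expGrowth]; ring
    _ ≤ Real.exp (β * s) * Real.exp (β * (t - s)) - 1 := by
        gcongr; exact Real.add_one_le_exp _
    _ = β * expGrowth β t := by
        rw [← Real.exp_add, ← mul_add, add_sub_cancel, mul_expGrowth]

theorem self_le_expGrowth (hβ : 0 ≤ β) (s : ℝ) : s ≤ expGrowth β s := by
  simpa [expGrowth_zero_right] using add_exp_mul_sub_le_expGrowth hβ 0 s

theorem monotone_expGrowth (hβ : 0 ≤ β) : Monotone (expGrowth β) := fun s t hst =>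
  (le_add_of_nonneg_right (mul_nonneg (Real.exp_nonneg _) (sub_nonneg.mpr hst))).trans
    (add_exp_mul_sub_le_expGrowth hβ s t)

theorem add_expGrowth_mul_add_le (hβ : 0 ≤ β) (s : ℝ) (hH : 0 ≤ H) (hδ : δ ≤ h * H) :
    δ + expGrowth β s * (H + β * δ) ≤ expGrowth β (s + h) * H :=
  calc δ + expGrowth β s * (H + β * δ)
      = expGrowth β s * H + Real.exp (β * s) * δ := by
        linear_combination δ * mul_expGrowth β s
    _ ≤ expGrowth β s * H + Real.exp (β * s) * (h * H) := by gcongr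
    _ = (expGrowth β s + Real.exp (β * s) * (s + h - s)) * H := by ring
    _ ≤ expGrowth β (s + h) * H := by gcongr; exact add_exp_mul_sub_le_expGrowth hβ s (s + h)

theorem add_expGrowth_mul_sub_le (hβ : 0 ≤ β) (hs0 : 0 ≤ s) (hs1 : s ≤ 1) (hH : 0 ≤ H)
    (hδ0 : 0 ≤ δ) (hδ : δ ≤ h * H) :
    δ + expGrowth β s * (H - δ) ≤ expGrowth β (s + h * (1 - s)) * H := by
  have hs : 0 ≤ 1 - s := sub_nonneg.mpr hs1
  have hexp : 1 ≤ Real.exp (β * s) := Real.one_le_exp (mul_nonneg hβ hs0)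
  calc δ + expGrowth β s * (H - δ)
      = expGrowth β s * H + (1 - expGrowth β s) * δ := by ring
    _ ≤ expGrowth β s * H + (1 - s) * δ := by gcongr; exact self_le_expGrowth hβ s
    _ ≤ expGrowth β s * H + Real.exp (β * s) * ((1 - s) * δ) := by
        rw [add_le_add_iff_left]; exact le_mul_of_one_le_left (mul_nonneg hs hδ0) hexp
    _ ≤ expGrowth β s * H + Real.exp (β * s) * ((1 - s) * (h * H)) := by gcongr
    _ = (expGrowth β s + Real.exp (β * s) * (s + h * (1 - s) - s)) * H := by ring
    _ ≤ expGrowth β (s + h * (1 - s)) * H := by gcongr; exact add_exp_mul_sub_le_expGrowth hβ s _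

end ExpGrowth

theorem IsReverseGreedyStep.card_sdiff_le {α R : Type*} [DecidableEq α] [LE R]
    {f : Finset α → R} {A B : Finset α} (hstep : IsReverseGreedyStep f A B) (S : Finset α) :
    (A \ S).card ≤ (B \ S).card + 1 := by
  obtain ⟨x, -, -, rfl⟩ := hstep
  rw [sdiff_right_comm, ← Finset.card_singleton x]
  exact Finset.card_le_card_sdiff_add_card

section RemovalCost

variable {α G : Type*} [DecidableEq α] [AddCommGroup G] [PartialOrder G] [IsOrderedAddMonoid G]
  {f : Finset α → G} {A B : Finset α} {x : α}

theorem Supermodular.sum_removal_cost_le (hf : Supermodular f) {D : Finset α} (hD : D ⊆ A) :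
    ∑ x ∈ D, (f (A \ {x}) - f A) ≤ f (A \ D) - f A := by
  induction D using Finset.induction_on with
  | empty => simp
  | insert x D hx ih =>
    have hsup : (A \ {x}) ∪ (A \ D) = A := by grind
    have hinf : (A \ {x}) ∩ (A \ D) = A \ insert x D := by grind
    have hpair := hf (A \ {x}) (A \ D)
    rw [Finset.sup_eq_union, Finset.inf_eq_inter, hsup, hinf] at hpair
    calc ∑ y ∈ insert x D, (f (A \ {y}) - f A)
        = f (A \ {x}) - f A + ∑ y ∈ D, (f (A \ {y}) - f A) := Finset.sum_insert hx
      _ ≤ f (A \ {x}) - f A + (f (A \ D) - f A) := by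
          gcongr; exact ih ((Finset.subset_insert x D).trans hD)
      _ = f (A \ {x}) + f (A \ D) - f A - f A := by abel
      _ ≤ f A + f (A \ insert x D) - f A - f A := by gcongr
      _ = f (A \ insert x D) - f A := by abel

theorem Supermodular.removal_cost_le_singleton (hf : Supermodular f) (hx : x ∈ A) :
    f (A \ {x}) - f A ≤ f ∅ - f {x} := by
  have hpair := hf (A \ {x}) {x}
  rw [Finset.sup_eq_union, Finset.inf_eq_inter, Finset.sdiff_inter_self,
    Finset.sdiff_union_of_subset (Finset.singleton_subset_iff.mpr hx)] at hpair
  rwa [sub_le_sub_iff, add_comm (f ∅)]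

theorem Supermodular.removal_cost_anti (hf : Supermodular f) (hAB : A ⊆ B) (hx : x ∈ A) :
    f (B \ {x}) - f B ≤ f (A \ {x}) - f A := by
  have hsup : A ∪ (B \ {x}) = B := by grind
  have hinf : A ∩ (B \ {x}) = A \ {x} := by grind
  have hpair := hf A (B \ {x})
  rw [Finset.sup_eq_union, Finset.inf_eq_inter, hsup, hinf] at hpair
  rwa [sub_le_sub_iff, add_comm (f (B \ {x})), add_comm (f (A \ {x}))]

theorem IsReverseGreedyStep.card_nsmul_cost_le (hf : Supermodular f)
    (hstep : IsReverseGreedyStep f A B) (S : Finset α) :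
    (A \ S).card • (f B - f A) ≤ f (A ∩ S) - f A := by
  obtain ⟨x, -, hmin, rfl⟩ := hstep
  calc (A \ S).card • (f (A \ {x}) - f A)
      ≤ ∑ y ∈ A \ S, (f (A \ {y}) - f A) :=
        Finset.card_nsmul_le_sum _ _ _ fun y hy =>
          sub_le_sub_right (hmin y (Finset.sdiff_subset hy)) _
    _ ≤ f (A \ (A \ S)) - f A := hf.sum_removal_cost_le Finset.sdiff_subset
    _ = f (A ∩ S) - f A := by rw [sdiff_sdiff_right_self, Finset.inf_eq_inter]

end RemovalCost

section ReverseGreedy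

variable {α : Type*} [DecidableEq α] {f : Finset α → ℝ} {A B S : Finset α} {x : α} {β : ℝ}

theorem Supermodular.removal_cost_le_of_curvature [Fintype α] (hf : Supermodular f) (hβ : 0 ≤ β)
    (hcurv : f ∅ - f {x} ≤ (1 + β) * (f (Finset.univ \ {x}) - f Finset.univ))
    (hA : x ∈ A) (hB : x ∈ B) :
    f (B \ {x}) - f B ≤ (1 + β) * (f (A \ {x}) - f A) :=
  calc f (B \ {x}) - f B ≤ f ∅ - f {x} := hf.removal_cost_le_singleton hB
    _ ≤ (1 + β) * (f (Finset.univ \ {x}) - f Finset.univ) := hcurv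
    _ ≤ (1 + β) * (f (A \ {x}) - f A) :=
        mul_le_mul_of_nonneg_left (hf.removal_cost_anti A.subset_univ hA) (by positivity)

/-- The potential of the current set `A` when `t` removals are left, relative to the
competitor `S`. -/
noncomputable def greedyPotential (f : Finset α → ℝ) (β : ℝ) (S : Finset α) (t : ℕ)
    (A : Finset α) : ℝ :=
  f A + expGrowth β (t / (A \ S).card) * (f (A ∩ S) - f A)

theorem greedyPotential_sdiff_le_of_notMem (hanti : Antitone f) (hβ : 0 ≤ β) {t : ℕ}
    (hA : x ∈ A) (hS : x ∉ S) (ht : t + 1 ≤ (A \ S).card)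
    (hcost : (A \ S).card • (f (A \ {x}) - f A) ≤ f (A ∩ S) - f A) :
    greedyPotential f β S t (A \ {x}) ≤ greedyPotential f β S (t + 1) A := by
  have hinter : A \ {x} ∩ S = A ∩ S := by grind
  obtain ⟨r, hr⟩ : ∃ r, (A \ S).card = r + 1 := ⟨_, (Nat.sub_add_cancel (by omega)).symm⟩
  have hcard : ((A \ {x}) \ S).card = r := by
    rw [sdiff_right_comm, Finset.card_sdiff_of_subset (by simp [hA, hS]), hr,
      Finset.card_singleton, Nat.add_sub_cancel]
  have htr : (t : ℝ) ≤ r := by exact_mod_cast (by omega : t ≤ r)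
  have hratio : ((t + 1 : ℕ) : ℝ) / ((r + 1 : ℕ) : ℝ) =
      t / r + 1 / (r + 1) * (1 - t / r) := by
    rcases r.eq_zero_or_pos with rfl | hr0
    · obtain rfl : t = 0 := by omega
      simp
    · push_cast
      field_simp
      ring
  rw [greedyPotential, greedyPotential, hinter, hcard, hr, hratio]
  have hstep := add_expGrowth_mul_sub_le hβ (s := t / r) (h := 1 / (r + 1))
    (by positivity) (div_le_one_of_le₀ htr (Nat.cast_nonneg r))
    (sub_nonneg.mpr (hanti (Finset.inter_subset_left (s₁ := A) (s₂ := S))))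
    (sub_nonneg.mpr (hanti (Finset.sdiff_subset (s := A) (t := {x}))))
    (by
      rw [one_div, le_inv_mul_iff₀ (by positivity)]
      simpa [hr] using hcost)
  rw [sub_sub_sub_cancel_right] at hstep
  linarith

theorem greedyPotential_sdiff_le_of_mem (hanti : Antitone f) (hβ : 0 ≤ β) {t : ℕ}
    (hS : x ∈ S) (ht : t + 1 ≤ (A \ S).card)
    (hcost : (A \ S).card • (f (A \ {x}) - f A) ≤ f (A ∩ S) - f A)
    (hcurv : f ((A ∩ S) \ {x}) - f (A ∩ S) ≤ (1 + β) * (f (A \ {x}) - f A)) :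
    greedyPotential f β S t (A \ {x}) ≤ greedyPotential f β S (t + 1) A := by
  have hinter : A \ {x} ∩ S = (A ∩ S) \ {x} := by grind
  have hsdiff : (A \ {x}) \ S = A \ S := by grind
  have hr : (0 : ℝ) < (A \ S).card := by exact_mod_cast (by omega : 0 < (A \ S).card)
  rw [greedyPotential, greedyPotential, hinter, hsdiff, Nat.cast_succ, add_div]
  have hstep := add_expGrowth_mul_add_le hβ (t / (A \ S).card) (h := 1 / (A \ S).card)
    (sub_nonneg.mpr (hanti (Finset.inter_subset_left (s₁ := A) (s₂ := S))))
    (by rwa [one_div, le_inv_mul_iff₀ hr, ← nsmul_eq_mul])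
  have hψ : 0 ≤ expGrowth β (t / (A \ S).card) :=
    (by positivity : (0 : ℝ) ≤ t / (A \ S).card).trans (self_le_expGrowth hβ _)
  have hgap : f ((A ∩ S) \ {x}) - f (A \ {x}) ≤
      f (A ∩ S) - f A + β * (f (A \ {x}) - f A) := by linarith
  linarith [mul_le_mul_of_nonneg_left hgap hψ]

variable [Fintype α]

theorem IsReverseGreedyStep.greedyPotential_le (hanti : Antitone f) (hf : Supermodular f)
    (hβ : 0 ≤ β)
    (hcurv : ∀ x, f ∅ - f {x} ≤ (1 + β) * (f (Finset.univ \ {x}) - f Finset.univ))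
    (hstep : IsReverseGreedyStep f A B) {t : ℕ} (ht : t + 1 ≤ (A \ S).card) :
    greedyPotential f β S t B ≤ greedyPotential f β S (t + 1) A := by
  have hcost := hstep.card_nsmul_cost_le hf S
  obtain ⟨x, hA, -, rfl⟩ := hstep
  by_cases hS : x ∈ S
  · exact greedyPotential_sdiff_le_of_mem hanti hβ hS ht hcost
      (hf.removal_cost_le_of_curvature hβ (hcurv x) hA (Finset.mem_inter.mpr ⟨hA, hS⟩))
  · exact greedyPotential_sdiff_le_of_notMem hanti hβ hA hS ht hcost

theorem reverseGreedy_le_greedyPotential (hanti : Antitone f) (hf : Supermodular f) (hβ : 0 ≤ β)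
    (hcurv : ∀ x, f ∅ - f {x} ≤ (1 + β) * (f (Finset.univ \ {x}) - f Finset.univ))
    {n : ℕ} {M : ℕ → Finset α} (hstep : ∀ i < n, IsReverseGreedyStep f (M i) (M (i + 1)))
    (hn : n ≤ (M 0 \ S).card) :
    f (M n) ≤ greedyPotential f β S n (M 0) := by
  induction n generalizing M with
  | zero => simp [greedyPotential, expGrowth_zero_right]
  | succ n ih =>
    have hfirst : IsReverseGreedyStep f (M 0) (M 1) := hstep 0 n.succ_pos
    have hcard : n ≤ (M 1 \ S).card :=
      Nat.le_of_succ_le_succ (hn.trans (hfirst.card_sdiff_le S))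
    exact (ih (M := fun i => M (i + 1)) (fun i hi => hstep (i + 1) (by omega)) hcard).trans
      (hfirst.greedyPotential_le hanti hf hβ hcurv hn)

/-- The hypothesis `hcurv` says that the curvature `κ` of `f` satisfies `κ / (1 - κ) ≤ β`. -/
theorem reverse_greedy_approx_general (hanti : Antitone f) (hf : Supermodular f)
    (hf0 : 0 ≤ f Finset.univ) (hβ : 0 ≤ β)
    (hcurv : ∀ x, f ∅ - f {x} ≤ (1 + β) * (f (Finset.univ \ {x}) - f Finset.univ))
    {n : ℕ} {M : ℕ → Finset α} (hM0 : M 0 = Finset.univ)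
    (hstep : ∀ i < n, IsReverseGreedyStep f (M i) (M (i + 1)))
    (hS : n + S.card ≤ Fintype.card α) :
    f (M n) ≤ (if β = 0 then 1 else (Real.exp β - 1) / β) * f S := by
  have hn : n ≤ (Finset.univ \ S).card := by
    rw [← Finset.compl_eq_univ_sdiff, Finset.card_compl]
    omega
  have hratio : (n : ℝ) / (Finset.univ \ S).card ≤ 1 :=
    div_le_one_of_le₀ (by exact_mod_cast hn) (Nat.cast_nonneg _)
  have hgap : 0 ≤ f S - f Finset.univ := sub_nonneg.mpr (hanti S.subset_univ)
  calc f (M n) ≤ greedyPotential f β S n Finset.univ :=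
        hM0 ▸ reverseGreedy_le_greedyPotential hanti hf hβ hcurv hstep (hM0 ▸ hn)
    _ ≤ f Finset.univ + expGrowth β 1 * (f S - f Finset.univ) := by
        rw [greedyPotential, Finset.univ_inter]
        gcongr
        exact monotone_expGrowth hβ hratio
    _ ≤ expGrowth β 1 * f S := by
        linarith [mul_le_mul_of_nonneg_right (self_le_expGrowth hβ 1) hf0]
    _ = (if β = 0 then 1 else (Real.exp β - 1) / β) * f S := by rw [expGrowth, mul_one]

end ReverseGreedy

theorem le_one_add_mul_of_eq_one_sub_inf' {ι K : Type*} [Field K] [LinearOrder K]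
    [IsStrictOrderedRing K] {s : Finset ι} (hs : s.Nonempty) {a b : ι → K} {κ : K}
    (hκ : κ = 1 - s.inf' hs fun i => a i / b i) (hκ1 : κ < 1)
    {i : ι} (hi : i ∈ s) (hb : 0 < b i) : b i ≤ (1 + κ / (1 - κ)) * a i := by
  have hpos : 0 < 1 - κ := sub_pos.mpr hκ1
  have hratio : 1 - κ ≤ a i / b i := by
    rw [hκ, sub_sub_cancel]
    exact Finset.inf'_le _ hi
  rw [one_add_div hpos.ne', sub_add_cancel, one_div, le_inv_mul_iff₀ hpos]
  exact (le_div_iff₀ hb).mp hratio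

/-- Approximation guarantee of reverse greedy: starting from `M₀ = Q` and
iteratively removing the element whose removal yields the smallest loss until `k` elements
remain, the resulting cache `M_{m−k}` satisfies
`ℓ(M_{m−k}) ≤ ((e^β − 1)/β) · ℓ(M*)`, where `β = κ/(1−κ)`, `κ` is the curvature
`1 − min_q (ℓ(Q\{q}) − ℓ(Q))/(ℓ(∅) − ℓ({q}))`, and `M*` is an optimal cache of size ≤ k.
The convention `(e^0−1)/0 = 1` for `β = 0` is encoded by the `if`. -/
theorem reverse_greedy_approx {Q : Type*} [Fintype Q] [DecidableEq Q] [Nonempty Q]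
    (m k : ℕ) (hm : Fintype.card Q = m) (hk1 : 1 ≤ k) (hkm : k ≤ m)
    (p c : Q → ℝ) (d : Q → Q → ℝ)
    (hp : ∀ q, 0 ≤ p q ∧ p q ≤ 1) (hc : ∀ q, 0 ≤ c q ∧ c q ≤ 1)
    (hd : ∀ q u, 0 ≤ d q u)
    (hgap : ∀ q : Q, cacheLoss p c d ({q} : Finset Q) < cacheLoss p c d (∅ : Finset Q))
    (κ β : ℝ)
    (hκ : κ = 1 - Finset.univ.inf' Finset.univ_nonempty (fun q : Q =>
      (cacheLoss p c d (Finset.univ \ {q}) - cacheLoss p c d Finset.univ) /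
        (cacheLoss p c d (∅ : Finset Q) - cacheLoss p c d ({q} : Finset Q))))
    (hκ0 : 0 ≤ κ) (hκ1 : κ < 1) (hβ : β = κ / (1 - κ))
    (M : ℕ → Finset Q) (hM0 : M 0 = Finset.univ)
    (hstep : ∀ i, 1 ≤ i → i ≤ m - k → ∃ qi ∈ M (i - 1),
      (∀ q ∈ M (i - 1), cacheLoss p c d (M (i - 1) \ {qi}) ≤ cacheLoss p c d (M (i - 1) \ {q}))
        ∧ M i = M (i - 1) \ {qi})
    (Mstar : Finset Q) (hMstar_card : Mstar.card ≤ k)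
    (hMstar_opt : ∀ S : Finset Q, S.card ≤ k → cacheLoss p c d Mstar ≤ cacheLoss p c d S) :
    cacheLoss p c d (M (m - k)) ≤
      (if β = 0 then 1 else (Real.exp β - 1) / β) * cacheLoss p c d Mstar := by
  have hp0 : ∀ q, 0 ≤ p q := fun q => (hp q).1
  have hβ0 : 0 ≤ β := hβ ▸ div_nonneg hκ0 (sub_nonneg.mpr hκ1.le)
  exact reverse_greedy_approx_general (antitone_cacheLoss hp0) (supermodular_cacheLoss hp0)
    (cacheLoss_nonneg hp0 (fun q => (hc q).1) hd _) hβ0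
    (fun q => hβ ▸ le_one_add_mul_of_eq_one_sub_inf' _ hκ hκ1 (Finset.mem_univ q)
      (sub_pos.mpr (hgap q)))
    hM0 (fun i hi => hstep (i + 1) (by omega) (by omega)) (by omega)
end

section
/- Let Q be a finite set of m queries, d : Q × Q → [0,1], k ≤ m, and α ≥ 1. Let p, p̂ : Q → [0,1] and c, c̄ : Q → [0,1] with c(q) ≤ c̄(q) for all q ∈ Q. Let M* be a minimizer of ℓ(·; p, c, d) over subsets of Q with at most k elements, and suppose M̂ ⊆ Q with |M̂| ≤ k satisfies ℓ(M̂; p̂, c̄, d) ≤ α · ℓ(M; p̂, c̄, d) for every M ⊆ Q with |M| ≤ k. Then ℓ(M̂; p, c, d) − α·ℓ(M*; p, c, d) ≤ α·Σ_{q ∈ Q} p(q)·(c̄(q) − c(q)) + (1 + α)·Σ_{q ∈ Q} |p̂(q) − p(q)|. -/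
/-!
Write `s(q)` for the truncated service cost `min{c(q), min_{u ∈ M} d(q,u)}`. It is monotone and
`1`-Lipschitz in `c(q)` and lies in `[0, c(q)]`. Passing from `c` to `c̄` therefore only increases
the loss of `M̂`, while it increases the loss of the comparator `M` by at most
`Σ p(q)(c̄(q) - c(q))`. Passing from `p` to `p̂` changes the loss of either cache by at most
`Σ |p̂(q) - p(q)| c̄(q)`. The approximation guarantee joins the two estimated losses, at
the price of multiplying the errors for `M` by `α`.
-/

/-- The cost `min{a, min_{u ∈ M} δ(u)}` of serving one query from the cache `M`, where `a` is the
cost of a cache miss and `δ u` the cost of answering by the cached item `u`. As in `cacheLoss`, it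
is `a` when `M` is empty. -/
noncomputable def serviceCost {ι : Type*} (a : ℝ) (δ : ι → ℝ) (M : Finset ι) : ℝ :=
  if h : M.Nonempty then min a (M.inf' h δ) else a

section ServiceCost

variable {ι : Type*} {a b : ℝ} {δ : ι → ℝ} {M : Finset ι}

theorem serviceCost_le : serviceCost a δ M ≤ a := by
  unfold serviceCost
  split_ifs
  exacts [min_le_left _ _, le_rfl]

theorem serviceCost_nonneg (ha : 0 ≤ a) (hδ : ∀ u ∈ M, 0 ≤ δ u) : 0 ≤ serviceCost a δ M := by
  unfold serviceCost
  split_ifs with hM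
  exacts [le_min ha (Finset.le_inf' hM δ hδ), ha]

theorem serviceCost_mono (hab : a ≤ b) : serviceCost a δ M ≤ serviceCost b δ M := by
  unfold serviceCost
  split_ifs
  exacts [min_le_min_right _ hab, hab]

theorem serviceCost_sub_serviceCost_le (hab : a ≤ b) :
    serviceCost b δ M - serviceCost a δ M ≤ b - a := by
  unfold serviceCost
  split_ifs with hM
  · rw [sub_le_iff_le_add', ← min_add_add_right, add_sub_cancel]
    exact min_le_min_left b (le_add_of_nonneg_right (sub_nonneg.2 hab))
  · exact le_rfl

end ServiceCost

section CacheLoss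

variable {Q : Type*} [Fintype Q] {p p' c c' : Q → ℝ} {d : Q → Q → ℝ} {M : Finset Q}

theorem cacheLoss_eq_sum_serviceCost :
    cacheLoss p c d M = ∑ q, p q * serviceCost (c q) (d q) M :=
  rfl

theorem cacheLoss_le_cacheLoss_of_cost_le (hp : ∀ q, 0 ≤ p q) (hc : ∀ q, c q ≤ c' q) :
    cacheLoss p c d M ≤ cacheLoss p c' d M := by
  simp only [cacheLoss_eq_sum_serviceCost]
  exact Finset.sum_le_sum fun q _ =>
    mul_le_mul_of_nonneg_left (serviceCost_mono (hc q)) (hp q)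

theorem cacheLoss_sub_cacheLoss_le_of_cost_le (hp : ∀ q, 0 ≤ p q) (hc : ∀ q, c q ≤ c' q) :
    cacheLoss p c' d M - cacheLoss p c d M ≤ ∑ q, p q * (c' q - c q) := by
  simp only [cacheLoss_eq_sum_serviceCost, ← Finset.sum_sub_distrib, ← mul_sub]
  exact Finset.sum_le_sum fun q _ =>
    mul_le_mul_of_nonneg_left (serviceCost_sub_serviceCost_le (hc q)) (hp q)

theorem abs_cacheLoss_sub_cacheLoss_le_sum_abs_sub_mul (hc : ∀ q, 0 ≤ c q)
    (hd : ∀ q, ∀ u ∈ M, 0 ≤ d q u) :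
    |cacheLoss p' c d M - cacheLoss p c d M| ≤ ∑ q, |p' q - p q| * c q := by
  simp only [cacheLoss_eq_sum_serviceCost, ← Finset.sum_sub_distrib, ← sub_mul]
  refine (Finset.abs_sum_le_sum_abs _ _).trans (Finset.sum_le_sum fun q _ => ?_)
  rw [abs_mul, abs_of_nonneg (serviceCost_nonneg (hc q) (hd q))]
  exact mul_le_mul_of_nonneg_left serviceCost_le (abs_nonneg _)

end CacheLoss

theorem offline_subopt_decomposition_general {Q : Type*} [Fintype Q] {α : ℝ} (hα : 0 ≤ α)
    {p phat c cbar : Q → ℝ} {d : Q → Q → ℝ} {M Mhat : Finset Q}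
    (hp : ∀ q, 0 ≤ p q) (hcbar : ∀ q, 0 ≤ cbar q) (hle : ∀ q, c q ≤ cbar q)
    (hd : ∀ q u, 0 ≤ d q u)
    (hMhat : cacheLoss phat cbar d Mhat ≤ α * cacheLoss phat cbar d M) :
    cacheLoss p c d Mhat - α * cacheLoss p c d M ≤
      α * (∑ q, p q * (cbar q - c q)) + (1 + α) * ∑ q, |phat q - p q| * cbar q := by
  set E := ∑ q, |phat q - p q| * cbar q
  have frequency_error (N : Finset Q) : |cacheLoss phat cbar d N - cacheLoss p cbar d N| ≤ E :=
    abs_cacheLoss_sub_cacheLoss_le_sum_abs_sub_mul hcbar fun q u _ => hd q u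
  have hM : cacheLoss phat cbar d M ≤
      cacheLoss p c d M + ∑ q, p q * (cbar q - c q) + E := by
    have cost_error : cacheLoss p cbar d M - cacheLoss p c d M ≤ ∑ q, p q * (cbar q - c q) :=
      cacheLoss_sub_cacheLoss_le_of_cost_le hp hle
    linarith [(abs_le.1 (frequency_error M)).2]
  have hMhat_loss : cacheLoss p c d Mhat ≤
      α * (cacheLoss p c d M + ∑ q, p q * (cbar q - c q) + E) + E :=
    calc cacheLoss p c d Mhat
      _ ≤ cacheLoss p cbar d Mhat := cacheLoss_le_cacheLoss_of_cost_le hp hle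
      _ ≤ cacheLoss phat cbar d Mhat + E := by linarith [(abs_le.1 (frequency_error Mhat)).1]
      _ ≤ α * cacheLoss phat cbar d M + E := by gcongr
      _ ≤ α * (cacheLoss p c d M + ∑ q, p q * (cbar q - c q) + E) + E := by gcongr
  linarith

/-- Offline suboptimality decomposition: if `M*` minimizes the true loss
over caches of size ≤ k, `c ≤ c̄` pointwise, and `M̂` is an `α`-approximate minimizer of
the estimated loss `ℓ(·; p̂, c̄, d)` over caches of size ≤ k, then
`ℓ(M̂; p, c, d) − α·ℓ(M*; p, c, d)
  ≤ α·Σ_q p(q)(c̄(q) − c(q)) + (1+α)·Σ_q |p̂(q) − p(q)|`. -/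
theorem offline_subopt_decomposition {Q : Type*} [Fintype Q]
    (m k : ℕ) (hm : Fintype.card Q = m) (hkm : k ≤ m)
    (α : ℝ) (hα : 1 ≤ α)
    (p phat c cbar : Q → ℝ) (d : Q → Q → ℝ)
    (hp : ∀ q, 0 ≤ p q ∧ p q ≤ 1) (hphat : ∀ q, 0 ≤ phat q ∧ phat q ≤ 1)
    (hc : ∀ q, 0 ≤ c q ∧ c q ≤ 1) (hcbar : ∀ q, 0 ≤ cbar q ∧ cbar q ≤ 1)
    (hle : ∀ q, c q ≤ cbar q)
    (hd : ∀ q u, 0 ≤ d q u ∧ d q u ≤ 1)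
    (Mstar : Finset Q) (hMstar_card : Mstar.card ≤ k)
    (hMstar_opt : ∀ M : Finset Q, M.card ≤ k →
      cacheLoss p c d Mstar ≤ cacheLoss p c d M)
    (Mhat : Finset Q) (hMhat_card : Mhat.card ≤ k)
    (hMhat_approx : ∀ M : Finset Q, M.card ≤ k →
      cacheLoss phat cbar d Mhat ≤ α * cacheLoss phat cbar d M) :
    cacheLoss p c d Mhat - α * cacheLoss p c d Mstar ≤
      α * (∑ q : Q, p q * (cbar q - c q)) + (1 + α) * ∑ q : Q, |phat q - p q| := by
  refine (offline_subopt_decomposition_general (zero_le_one.trans hα) (fun q => (hp q).1)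
    (fun q => (hcbar q).1) hle (fun q u => (hd q u).1) (hMhat_approx Mstar hMstar_card)).trans ?_
  gcongr with q
  exact mul_le_of_le_one_right (abs_nonneg _) (hcbar q).2
end

section
/- Let K ≥ 1 be a real number and let a : ℕ → ℝ be a sequence such that for every τ with 1 ≤ τ ≤ n, a(τ) ≥ 1 + √(K · Σ_{τ'=1}^{τ−1} a(τ')). Then a(n) ≥ K^{1 − 2^{1−n}}. -/
/-! Since the previous stage size `x` is one of the nonnegative terms of the sum, the next one is at
least the geometric mean `√(K * x)` of `K` and `x`. Taking the geometric mean with `K` halves the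
weight of the initial value, so after `m` steps from `a 1` the bound is the weighted geometric mean
`K ^ (1 - t) * a 1 ^ t` with `t = (1 / 2) ^ m`, and `1 ≤ a 1`. -/

theorem sqrt_mul_rpow_one_sub_mul_rpow {K c t : ℝ} (hK : 0 ≤ K) (hc : 0 ≤ c) (ht : t ≤ 1) :
    √(K * (K ^ (1 - t) * c ^ t)) = K ^ (1 - t / 2) * c ^ (t / 2) := by
  have hKt : K * K ^ (1 - t) = K ^ (1 + (1 - t)) := by
    rw [Real.rpow_add_of_nonneg hK zero_le_one (sub_nonneg.2 ht), Real.rpow_one]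
  rw [← mul_assoc, hKt, Real.sqrt_eq_rpow, Real.mul_rpow (by positivity) (by positivity),
    ← Real.rpow_mul hK, ← Real.rpow_mul hc]
  ring_nf

theorem rpow_one_sub_mul_rpow_le_of_sqrt_mul_le {K : ℝ} (hK : 0 ≤ K) {b : ℕ → ℝ}
    (hb : 0 ≤ b 0) {m : ℕ} (h : ∀ i < m, √(K * b i) ≤ b (i + 1)) :
    K ^ (1 - (1 / 2 : ℝ) ^ m) * b 0 ^ ((1 / 2 : ℝ) ^ m) ≤ b m := by
  induction m with
  | zero => simp
  | succ m ih =>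
    have hm : (1 / 2 : ℝ) ^ m ≤ 1 := pow_le_one₀ (by norm_num) (by norm_num)
    calc K ^ (1 - (1 / 2 : ℝ) ^ (m + 1)) * b 0 ^ ((1 / 2 : ℝ) ^ (m + 1))
        = √(K * (K ^ (1 - (1 / 2 : ℝ) ^ m) * b 0 ^ ((1 / 2 : ℝ) ^ m))) := by
          rw [sqrt_mul_rpow_one_sub_mul_rpow hK hb hm, pow_succ, mul_one_div]
      _ ≤ √(K * b m) := by
          gcongr
          exact ih fun i hi => h i (hi.trans m.lt_succ_self)
      _ ≤ b (m + 1) := h m m.lt_succ_self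

theorem two_rpow_one_sub_natCast_succ (m : ℕ) :
    (2 : ℝ) ^ (1 - ((m + 1 : ℕ) : ℝ)) = (1 / 2) ^ m := by
  rw [Nat.cast_succ, sub_add_cancel_right, Real.rpow_neg zero_le_two, Real.rpow_natCast,
    one_div, inv_pow]

theorem stage_size_growth_general (K : ℝ) (hK : 0 ≤ K) (a : ℕ → ℝ) (n : ℕ) (hn : 1 ≤ n)
    (h_one : 1 ≤ a 1)
    (h : ∀ τ, 1 ≤ τ → τ ≤ n → √(K * ∑ τ' ∈ Finset.Icc 1 (τ - 1), a τ') ≤ a τ) :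
    K ^ ((1 : ℝ) - 2 ^ (1 - (n : ℝ))) ≤ a n := by
  obtain ⟨m, rfl⟩ := Nat.exists_eq_add_of_le' hn
  have ha : ∀ τ, 1 ≤ τ → τ ≤ m + 1 → 0 ≤ a τ := fun τ hτ hτm =>
    (Real.sqrt_nonneg _).trans (h τ hτ hτm)
  have h_step : ∀ i < m, √(K * a (i + 1)) ≤ a (i + 1 + 1) := fun i hi => by
    have h_le_sum : a (i + 1) ≤ ∑ τ ∈ Finset.Icc 1 (i + 1), a τ :=
      Finset.single_le_sum (fun τ hτ => ha τ (by grind) (by grind)) (by simp)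
    calc √(K * a (i + 1)) ≤ √(K * ∑ τ ∈ Finset.Icc 1 (i + 1), a τ) := by gcongr
      _ ≤ a (i + 1 + 1) := h (i + 1 + 1) (by lia) (by lia)
  calc K ^ ((1 : ℝ) - 2 ^ (1 - ((m + 1 : ℕ) : ℝ)))
      = K ^ (1 - (1 / 2 : ℝ) ^ m) := by rw [two_rpow_one_sub_natCast_succ]
    _ ≤ K ^ (1 - (1 / 2 : ℝ) ^ m) * a 1 ^ ((1 / 2 : ℝ) ^ m) :=
        le_mul_of_one_le_right (by positivity) (Real.one_le_rpow h_one (by positivity))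
    _ ≤ a (m + 1) :=
        rpow_one_sub_mul_rpow_le_of_sqrt_mul_le hK (b := fun i => a (i + 1)) (ha 1 le_rfl hn) h_step

/-- Stage-size growth of the stage-based switching scheme: if `K ≥ 1` and
the stage sizes satisfy `a(τ) ≥ 1 + √(K·Σ_{τ'=1}^{τ−1} a(τ'))` for all `1 ≤ τ ≤ n`, then
`a(n) ≥ K^{1 − 2^{1−n}}`. -/
theorem stage_size_growth (K : ℝ) (hK : 1 ≤ K) (a : ℕ → ℝ) (n : ℕ) (hn : 1 ≤ n)
    (h : ∀ τ, 1 ≤ τ → τ ≤ n →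
      1 + Real.sqrt (K * ∑ τ' ∈ Finset.Icc 1 (τ - 1), a τ') ≤ a τ) :
    K ^ ((1 : ℝ) - 2 ^ (1 - (n : ℝ))) ≤ a n := by
  exact stage_size_growth_general K (zero_le_one.trans hK) a n hn (by simpa using h 1 le_rfl hn)
    fun τ hτ hτn => (le_add_of_nonneg_left zero_le_one).trans (h τ hτ hτn)
end

section
/- Let m ≥ 1 and T be positive integers with T/m ≥ e^e, and set s₀ = log log(T/m). Suppose for each q in a finite index set Q of size m there is a finite sequence of positive integers a(q,1), …, a(q,n_q) (stage sizes) such that for every non-final stage τ < n_q one has a(q,τ) ≥ 1 + √(T · Σ_{τ'=1}^{τ−1} a(q,τ') / m), and suppose the total number of observations satisfies Σ_{q ∈ Q} Σ_{τ=1}^{n_q} a(q,τ) ≤ T. Then the total number of stages satisfies Σ_{q ∈ Q} n_q ≤ m·(2·s₀ + e + 3). -/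
/-!
Write `x = T / m`. Keeping only the latest term of the sum under the square root, completed stages
satisfy `a 1 ≥ 1` and `a (k + 2) ≥ √(x * a (k + 1))`. Writing `a (k + 1) = x ^ (1 - δ)`, such a step
at least halves `δ`, so `a (k + 1) ≥ x ^ (1 - 1 / 2 ^ k)`, which is at least `x / e` once
`2 ^ k ≥ log x`. As `log 2 ≥ 1 / 2`, this holds for `k ≥ 2 log (log x)`, so each query has at most
`⌈2 log (log x)⌉₊` completed stages shorter than `x / e`, besides its final stage. Since
`T = m * x`, all queries together have at most `m * e` completed stages of length at least `x / e`.
-/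

open Finset Real

lemma rpow_one_sub_le_of_sqrt_mul_le {x : ℝ} (hx : 0 ≤ x) {u : ℕ → ℝ} {N : ℕ} (hzero : 1 ≤ u 0)
    (hstep : ∀ k < N, √(x * u k) ≤ u (k + 1)) {k : ℕ} (hk : k ≤ N) :
    x ^ (1 - 1 / 2 ^ k : ℝ) ≤ u k := by
  induction k with
  | zero => simpa using hzero
  | succ k ih =>
    have hexp : (1 - 1 / 2 ^ (k + 1) : ℝ) = (1 + (1 - 1 / 2 ^ k)) * (1 / 2) := by ring
    have hpow : (1 / 2 ^ k : ℝ) ≤ 1 :=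
      div_le_one_of_le₀ (one_le_pow₀ one_le_two) (by positivity)
    calc x ^ (1 - 1 / 2 ^ (k + 1) : ℝ)
        = √(x * x ^ (1 - 1 / 2 ^ k : ℝ)) := by
          rw [hexp, rpow_mul hx, ← sqrt_eq_rpow, rpow_one_add' hx (by linarith)]
      _ ≤ √(x * u k) := by gcongr; exact ih (by omega)
      _ ≤ u (k + 1) := hstep k hk

lemma div_exp_one_le_rpow_one_sub {x y : ℝ} (hx : 0 < x) (hy : 0 < y) (hxy : log x ≤ y) :
    x / exp 1 ≤ x ^ (1 - 1 / y) := by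
  have hroot : x ^ (1 / y) ≤ exp 1 := by
    rw [rpow_def_of_pos hx, mul_one_div]
    exact exp_le_exp.mpr ((div_le_one hy).mpr hxy)
  rw [rpow_sub hx, rpow_one]
  gcongr

-- `exp (-1)` is where `2 * log y + 2`, which has to dominate a natural number, becomes nonnegative.
lemma exists_nat_le_two_pow_of_exp_neg_one_le {y : ℝ} (hy : exp (-1) ≤ y) :
    ∃ K : ℕ, y ≤ 2 ^ K ∧ (K : ℝ) ≤ 2 * log y + 2 := by
  have hypos : 0 < y := (exp_pos _).trans_le hy
  have hlog : -1 ≤ log y := (le_log_iff_exp_le hypos).mpr hy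
  refine ⟨⌈2 * log y⌉₊, ?_, ?_⟩
  · have hceil : 2 * log y ≤ ⌈2 * log y⌉₊ := Nat.le_ceil _
    have hlog_two : (1 / 2 : ℝ) ≤ log 2 := by linarith [log_two_gt_d9]
    rw [← log_le_log_iff hypos (by positivity), log_pow]
    calc log y ≤ ⌈2 * log y⌉₊ * (1 / 2) := by linarith
      _ ≤ ⌈2 * log y⌉₊ * log 2 := by gcongr
  · rcases le_total (log y) 0 with hneg | hnonneg
    · rw [Nat.ceil_eq_zero.mpr (by linarith), Nat.cast_zero]
      linarith
    · linarith [Nat.ceil_lt_add_one (mul_nonneg zero_le_two hnonneg)]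

section Stages

variable {x : ℝ} {n : ℕ} {a : ℕ → ℝ}

lemma rpow_one_sub_le_stage (hx : 0 ≤ x)
    (hstage : ∀ τ, 1 ≤ τ → τ < n → max 1 √(x * ∑ τ' ∈ Icc 1 (τ - 1), a τ') ≤ a τ)
    {k : ℕ} (hk : k + 1 < n) : x ^ (1 - 1 / 2 ^ k : ℝ) ≤ a (k + 1) := by
  have hone : ∀ τ, 1 ≤ τ → τ < n → 1 ≤ a τ := fun τ h₁ h₂ ↦
    (le_max_left _ _).trans (hstage τ h₁ h₂)
  refine rpow_one_sub_le_of_sqrt_mul_le (u := fun k ↦ a (k + 1)) (N := k) hx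
    (hone 1 le_rfl (by omega)) (fun j hj ↦ ?_) le_rfl
  have hlast : a (j + 1) ≤ ∑ τ' ∈ Icc 1 (j + 1), a τ' :=
    single_le_sum (f := a)
      (fun i hi ↦ zero_le_one.trans (hone i (mem_Icc.mp hi).1 (by have := mem_Icc.mp hi; omega)))
      (by simp)
  calc √(x * a (j + 1)) ≤ √(x * ∑ τ' ∈ Icc 1 (j + 1), a τ') := by gcongr
    _ ≤ a (j + 2) := (le_max_right _ _).trans (hstage (j + 2) (by omega) (by omega))

lemma sub_mul_div_exp_one_le_sum_stages (hx : 0 < x)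
    (hstage : ∀ τ, 1 ≤ τ → τ < n → max 1 √(x * ∑ τ' ∈ Icc 1 (τ - 1), a τ') ≤ a τ)
    {K : ℕ} (hK : log x ≤ 2 ^ K) :
    ((n : ℝ) - (K + 1)) * (x / exp 1) ≤ ∑ τ ∈ Ico 1 n, a τ := by
  have hlong : ∀ τ ∈ Ico (K + 1) n, x / exp 1 ≤ a τ := by
    intro τ hτ
    obtain ⟨hKτ, hτn⟩ := mem_Ico.mp hτ
    obtain ⟨k, rfl⟩ := Nat.exists_eq_add_of_le' (Nat.le_of_add_left_le hKτ)
    have hlog : log x ≤ 2 ^ k := hK.trans (pow_le_pow_right₀ one_le_two (by omega))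
    exact (div_exp_one_le_rpow_one_sub hx (by positivity) hlog).trans
      (rpow_one_sub_le_stage hx.le hstage hτn)
  have hnonneg : ∀ τ ∈ Ico 1 n, 0 ≤ a τ := fun τ hτ ↦
    zero_le_one.trans <| (le_max_left _ _).trans <|
      hstage τ (mem_Ico.mp hτ).1 (mem_Ico.mp hτ).2
  calc ((n : ℝ) - (K + 1)) * (x / exp 1) ≤ (n - (K + 1) : ℕ) * (x / exp 1) := by
        gcongr
        exact sub_le_iff_le_add.mpr (mod_cast le_tsub_add)
    _ = #(Ico (K + 1) n) • (x / exp 1) := by rw [Nat.card_Ico, nsmul_eq_mul]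
    _ ≤ ∑ τ ∈ Ico (K + 1) n, a τ := card_nsmul_le_sum _ _ _ hlong
    _ ≤ ∑ τ ∈ Ico 1 n, a τ :=
        sum_le_sum_of_subset_of_nonneg (Ico_subset_Ico_left (by omega)) fun τ hτ _ ↦ hnonneg τ hτ

end Stages

theorem switch_count_bound_general {Q : Type*} [Fintype Q] {m T : ℝ}
    (hcard : (Fintype.card Q : ℝ) ≤ m) (hTm : exp (exp (-1)) ≤ T / m)
    (n : Q → ℕ) (a : Q → ℕ → ℝ)
    (hstage : ∀ q τ, 1 ≤ τ → τ < n q →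
      max 1 √(T * (∑ τ' ∈ Icc 1 (τ - 1), a q τ') / m) ≤ a q τ)
    (htotal : ∑ q, ∑ τ ∈ Ico 1 (n q), a q τ ≤ T) :
    ∑ q, (n q : ℝ) ≤ m * (2 * log (log (T / m)) + exp 1 + 3) := by
  have hx : 0 < T / m := (exp_pos _).trans_le hTm
  have hm : m ≠ 0 := by rintro rfl; simp at hx
  obtain ⟨K, hlogK, hK⟩ :=
    exists_nat_le_two_pow_of_exp_neg_one_le ((le_log_iff_exp_le hx).mpr hTm)
  have hlong : (∑ q, ((n q : ℝ) - (K + 1))) * (T / m / exp 1) ≤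
      m * exp 1 * (T / m / exp 1) :=
    calc _ ≤ ∑ q, ∑ τ ∈ Ico 1 (n q), a q τ := by
          rw [sum_mul]
          gcongr with q
          refine sub_mul_div_exp_one_le_sum_stages hx (fun τ h₁ h₂ ↦ ?_) hlogK
          simpa only [mul_div_right_comm] using hstage q τ h₁ h₂
      _ ≤ T := htotal
      _ = m * exp 1 * (T / m / exp 1) := by field_simp
  have hcount : ∑ q, (n q : ℝ) - Fintype.card Q * (K + 1) ≤ m * exp 1 := by
    simpa [sum_sub_distrib, mul_add] using le_of_mul_le_mul_right hlong (by positivity)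
  calc ∑ q, (n q : ℝ) ≤ Fintype.card Q * (K + 1) + m * exp 1 := by linarith
    _ ≤ m * (K + 1) + m * exp 1 := by gcongr
    _ = m * (K + exp 1 + 1) := by ring
    _ ≤ m * (2 * log (log (T / m)) + exp 1 + 3) :=
        mul_le_mul_of_nonneg_left (by linarith) ((Nat.cast_nonneg _).trans hcard)

/-- Deterministic core of the switch-count bound for CLCB-SC-LS: with
`T/m ≥ e^e` and `s₀ = log log(T/m)`, if for each query `q` the stage sizes
`a(q,1), …, a(q,n_q)` are positive integers satisfying, for every non-final stage `τ < n_q`,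
`a(q,τ) ≥ 1 + √(T·Σ_{τ'<τ} a(q,τ')/m)`, and the total number of observations is at most `T`,
then the total number of stages satisfies `Σ_q n_q ≤ m·(2·s₀ + e + 3)`. -/
theorem switch_count_bound {Q : Type*} [Fintype Q]
    (m T : ℕ) (hm : 1 ≤ m) (hT : 0 < T) (hcard : Fintype.card Q = m)
    (hTm : Real.exp (Real.exp 1) ≤ (T : ℝ) / (m : ℝ))
    (s₀ : ℝ) (hs₀ : s₀ = Real.log (Real.log ((T : ℝ) / (m : ℝ))))
    (n : Q → ℕ) (a : Q → ℕ → ℕ)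
    (hpos : ∀ q, ∀ τ, 1 ≤ τ → τ ≤ n q → 0 < a q τ)
    (hstage : ∀ q, ∀ τ, 1 ≤ τ → τ < n q →
      1 + Real.sqrt ((T : ℝ) * (∑ τ' ∈ Finset.Icc 1 (τ - 1), (a q τ' : ℝ)) / (m : ℝ)) ≤
        (a q τ : ℝ))
    (htotal : ∑ q : Q, ∑ τ ∈ Finset.Icc 1 (n q), a q τ ≤ T) :
    (∑ q : Q, (n q : ℝ)) ≤ (m : ℝ) * (2 * s₀ + Real.exp 1 + 3) := by
  subst hs₀
  exact switch_count_bound_general (mod_cast hcard.le)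
    ((exp_le_exp.mpr (exp_le_exp.mpr (by norm_num))).trans hTm) n (fun q τ ↦ a q τ)
    (fun q τ h₁ h₂ ↦ (max_le_add_of_nonneg zero_le_one (sqrt_nonneg _)).trans (hstage q τ h₁ h₂))
    (mod_cast (sum_le_sum fun q _ ↦ sum_le_sum_of_subset Ico_subset_Icc_self).trans htotal)
end
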